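/- (Insertion resilience for P1.) If L ∈ valid A n B and Suc i < len L, then for every message M, ins(L, Suc i, M) ∉ valid A n B; i.e. no offer can be inserted between two offers of a valid chain while keeping the chain valid. -/

import Mathlib

inductive agent : Type
  | Server : agent
  | Friend : ℕ → agent
  | Spy : agent
deriving DecidableEq

inductive msg : Type
  | Agent : agent → msg
  | Number : ℕ → msg
  | Nonce : ℕ → msg
  | Key : ℕ → msg
  | Hash : msg → msg
  | MPair : msg → msg → msg
  | Crypt : ℕ → msg → msg
deriving DecidableEq

inductive partsP (H : Set msg) : msg → Prop
  | Inj : ∀ X, X ∈ H → partsP H X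
  | Fst : ∀ X Y, partsP H (msg.MPair X Y) → partsP H X
  | Snd : ∀ X Y, partsP H (msg.MPair X Y) → partsP H Y
  | Body : ∀ K X, partsP H (msg.Crypt K X) → partsP H X

/-- `parts H`: sub-components of messages of `H`. -/
def parts (H : Set msg) : Set msg := {X | partsP H X}

inductive analzP (invKey : ℕ → ℕ) (H : Set msg) : msg → Prop
  | Inj : ∀ X, X ∈ H → analzP invKey H X
  | Fst : ∀ X Y, analzP invKey H (msg.MPair X Y) → analzP invKey H X
  | Snd : ∀ X Y, analzP invKey H (msg.MPair X Y) → analzP invKey H Y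
  | Decrypt : ∀ K X, analzP invKey H (msg.Crypt K X) →
      analzP invKey H (msg.Key (invKey K)) → analzP invKey H X

/-- `analz invKey H`: what can be obtained by decomposing and decrypting messages of `H`. -/
def analz (invKey : ℕ → ℕ) (H : Set msg) : Set msg := {X | analzP invKey H X}

inductive synthP (H : Set msg) : msg → Prop
  | Inj : ∀ X, X ∈ H → synthP H X
  | Ag : ∀ a, synthP H (msg.Agent a)
  | Num : ∀ n, synthP H (msg.Number n)
  | Hsh : ∀ X, synthP H X → synthP H (msg.Hash X)
  | Pr : ∀ X Y, synthP H X → synthP H Y → synthP H (msg.MPair X Y)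
  | Cry : ∀ K X, synthP H X → msg.Key K ∈ H → synthP H (msg.Crypt K X)

/-- `synth H`: messages that can be synthesized from `H`. -/
def synth (H : Set msg) : Set msg := {X | synthP H X}

inductive guardP (invKey : ℕ → ℕ) (n : ℕ) (Ks : Set ℕ) : msg → Prop
  | No_Nonce : ∀ X, msg.Nonce n ∉ parts {X} → guardP invKey n Ks X
  | Guard : ∀ K X, invKey K ∈ Ks → guardP invKey n Ks (msg.Crypt K X)
  | Cry : ∀ K X, guardP invKey n Ks X → guardP invKey n Ks (msg.Crypt K X)
  | Pr : ∀ X Y, guardP invKey n Ks X → guardP invKey n Ks Y →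
      guardP invKey n Ks (msg.MPair X Y)

/-- `guard n Ks`: messages in which `Nonce n` is guarded by the keys of `Ks`. -/
def guardMsg (invKey : ℕ → ℕ) (n : ℕ) (Ks : Set ℕ) : Set msg := {X | guardP invKey n Ks X}

/-- `Guard n Ks H`: every message of `H` lies in `guard n Ks`. -/
def Guard (invKey : ℕ → ℕ) (n : ℕ) (Ks : Set ℕ) (H : Set msg) : Prop :=
  ∀ X ∈ H, X ∈ guardMsg invKey n Ks
/-- The empty encoded list: a fixed atomic message. -/
def nilm : msg := msg.Number 0

/-- Cons on encoded lists. -/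
def consm (X L : msg) : msg := msg.MPair X L

/-- Head of an encoded list. -/
def headm : msg → msg
  | msg.MPair X _ => X
  | _ => nilm

/-- Tail of an encoded list. -/
def tailm : msg → msg
  | msg.MPair _ L => L
  | _ => nilm

/-- Length of an encoded list. -/
def lenm : msg → ℕ
  | msg.MPair _ L => lenm L + 1
  | _ => 0

/-- `ith L i` is the `i+1`-th element of `L`. -/
def ith : msg → ℕ → msg
  | L, 0 => headm L
  | L, i + 1 => ith (tailm L) i

/-- `repl L i M` is `L` with its `i+1`-th element replaced by `M`. -/
def repl : msg → ℕ → msg → msg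
  | msg.MPair _ L, 0, M => msg.MPair M L
  | msg.MPair X L, i + 1, M => msg.MPair X (repl L i M)
  | L, _, _ => L

/-- `insm L i M` is `L` with `M` inserted before the `i+1`-th element of `L`. -/
def insm : msg → ℕ → msg → msg
  | L, 0, M => msg.MPair M L
  | msg.MPair X L, i + 1, M => msg.MPair X (insm L i M)
  | L, _, _ => L

/-- `trunc L i` truncates the `i` first elements of `L`. -/
def trunc : msg → ℕ → msg
  | L, 0 => L
  | msg.MPair _ L, i + 1 => trunc L i
  | L, _ => L
/-- `sign B X = ⟨Agent B, X, Crypt (priK B) (Hash X)⟩`. -/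
def sign (invKey : ℕ → ℕ) (pubK : agent → ℕ) (B : agent) (X : msg) : msg :=
  msg.MPair (msg.Agent B) (msg.MPair X (msg.Crypt (invKey (pubK B)) (msg.Hash X)))

/-- The chaining relation of protocol P1. -/
def chain (invKey : ℕ → ℕ) (pubK : agent → ℕ) (B : agent) (ofr : ℕ) (A : agent)
    (L : msg) (C : agent) : msg :=
  sign invKey pubK B (msg.MPair (msg.Crypt (pubK A) (msg.Nonce ofr))
    (msg.Hash (msg.MPair (headm L) (msg.Agent C))))

/-- The start of the chaining relation. -/
def anchor (invKey : ℕ → ℕ) (pubK : agent → ℕ) (A : agent) (n : ℕ) (B : agent) : msg :=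
  chain invKey pubK A n A (consm nilm nilm) B

/-- The signer of an offer `chain B ofr A L C`, i.e. `Agent B`. -/
def shop (M : msg) : msg := headm M

/-- The designated next server of an offer `chain B ofr A L C`, i.e. `C`. -/
def next_shop : msg → agent
  | msg.MPair _ (msg.MPair (msg.MPair _ (msg.Hash (msg.MPair _ (msg.Agent C)))) _) => C
  | _ => agent.Server
/-- Valid chains of offers for protocol P1. -/
inductive validP (invKey : ℕ → ℕ) (pubK : agent → ℕ) (A : agent) (n : ℕ) (B : agent) :
    msg → Prop
  | Req : validP invKey pubK A n B (consm (anchor invKey pubK A n B) nilm)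
  | Prop : ∀ L ofr C, validP invKey pubK A n B L →
      validP invKey pubK A n B
        (consm (chain invKey pubK (next_shop (headm L)) ofr A L C) L)

def valid (invKey : ℕ → ℕ) (pubK : agent → ℕ) (A : agent) (n : ℕ) (B : agent) : Set msg :=
  {L | validP invKey pubK A n B L}

theorem validP_inv (invKey : ℕ → ℕ) (pubK : agent → ℕ) (A B : agent) (n : ℕ) (X Y T : msg)
    (h : validP invKey pubK A n B (msg.MPair X (msg.MPair Y T))) :
    validP invKey pubK A n B (msg.MPair Y T) ∧
      ∃ D ofr C, X = chain invKey pubK D ofr A (msg.MPair Y T) C := by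
  generalize hZ : msg.MPair X (msg.MPair Y T) = Z at h
  rcases h with _ | ⟨L, ofr, C, hL⟩
  · simp [consm, nilm] at hZ
  · simp only [consm, msg.MPair.injEq] at hZ
    obtain ⟨h1, h2⟩ := hZ
    subst h2
    exact ⟨hL, _, _, _, h1⟩

theorem ins_aux (invKey : ℕ → ℕ) (pubK : agent → ℕ) (A B : agent) (n : ℕ) (M : msg) (i : ℕ) :
    ∀ L, validP invKey pubK A n B L → i + 1 < lenm L →
      ¬ validP invKey pubK A n B (insm L (i + 1) M) := by
  induction i with
  | zero =>
    intro L hL hlen h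
    rcases L with _ | _ | _ | _ | _ | ⟨X, L⟩ | _ <;> simp [lenm] at hlen
    rcases L with _ | _ | _ | _ | _ | ⟨Y, T⟩ | _ <;> simp [lenm] at hlen
    simp only [insm] at h
    obtain ⟨-, D, o, C, h1⟩ := validP_inv _ _ _ _ _ _ _ _ hL
    obtain ⟨h3, D', o', C', h2⟩ := validP_inv _ _ _ _ _ _ _ _ h
    obtain ⟨-, D2, o2, C2, h4⟩ := validP_inv _ _ _ _ _ _ _ _ h3
    have hYM : Y = M := by
      rw [h1] at h2
      simp [chain, sign, headm] at h2
      tauto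
    subst hYM
    have := congrArg sizeOf h4
    simp [chain, sign, headm] at this
    omega
  | succ i ih =>
    intro L hL hlen h
    rcases L with _ | _ | _ | _ | _ | ⟨X, L⟩ | _ <;> simp [lenm] at hlen
    rcases L with _ | _ | _ | _ | _ | ⟨Y, T⟩ | _ <;> simp [lenm] at hlen
    simp only [insm] at h
    refine ih (msg.MPair Y T) (validP_inv _ _ _ _ _ _ _ _ hL).1 (by simp [lenm]; omega) ?_
    simp only [insm]
    exact (validP_inv _ _ _ _ _ _ _ _ h).1

/-- Insertion resilience for P1: no offer can be inserted between two offers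
of a valid chain while keeping the chain valid. -/
theorem insertion_resilience
    (invKey : ℕ → ℕ) (pubK : agent → ℕ)
    (hinv : ∀ K, invKey (invKey K) = K)
    (A B : agent) (n : ℕ) (L : msg) (i : ℕ)
    (hL : L ∈ valid invKey pubK A n B)
    (hlen : i + 1 < lenm L) :
    ∀ M : msg, insm L (i + 1) M ∉ valid invKey pubK A n B := by
  exact fun M h => ins_aux invKey pubK A B n M i L hL hlen h
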